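/- arXiv:2401.15512 — 2 statements merged into one kernel-verified Lean document; each statement's English description precedes it below -/
import Mathlib

section
/- Let f be the higher energy function of order ℓ, strictly positive on (u, ∞), where u = r_ℓ is the largest zero of f when ℓ ≥ 1 and u = 0 when ℓ = 0. There exists N_0 (depending only on ℓ) such that for every N ≥ N_0 the following holds: if (x_n)_{n=1}^N is a strictly increasing sequence in (u, ∞) satisfying 1/(x_{n+1}−x_n) = Σ_{k=n+1}^N (−f'(x_k)/f(x_k)) for all 1 ≤ n < N (as holds for the part of any MIW sequence with right boundary condition at +∞ contained in (u,∞)), then x_N − x_{N−1} < 2/√(log N). Symmetrically, with respect to the part (x_n)_{n=1}^N of an MIW sequence contained in (−∞, v), where v = r_1 when ℓ ≥ 1 and v = 0 when ℓ = 0, satisfying the corresponding left boundary condition at −∞, one has x_2 − x_1 < 2/√(log N) for all sufficiently large N. -/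
/-!
Write `f'/f = -x + 2 p'/p` with `p` the Hermite polynomial, and `h = -f'/f`. Factoring the largest
zero `u` out of `p` as `p = (X - u)^m q`, the quotient `p'/p = m/(x - u) + q'/q` is bounded below
on `(u, ∞)` and bounded above on `(u + 1, ∞)`, because `q'/q` is continuous on `[u, ∞)` and tends
to `0` at `+∞`. Hence, for a constant `C`, `h x ≤ x + C` on `(u, ∞)` and `x - C ≤ h x` on
`(u + 1, ∞)`: this is `logDeriv_bounds`.

By the upper bound, the `j`-th gap counted from the right is at least `1 / (j (x_N + C))`. Summing
the gaps gives `log N ≤ harmonic (N - 1) ≤ (x_N + C) (x_N - u) ≤ (x_N + C)^2` once `C` is enlarged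
so that `-u ≤ C`; thus `x_N ≥ √(log N) - C`. The lower bound then makes
`1 / (x_N - x_{N-1}) = h x_N` at least `√(log N) - 2 C`, which exceeds `√(log N) / 2` for large `N`;
this is `gap_bound`. The statement at the left end follows by reflecting `x ↦ -x`.
-/

open MeasureTheory Filter Set

noncomputable section

/-- The probabilists' Hermite polynomial `p_l(x) = (-1)^l e^{x^2/2} (d/dx)^l e^{-x^2/2}`
as a real function. -/
def hermiteFun (l : ℕ) (x : ℝ) : ℝ :=
  (-1 : ℝ) ^ l * Real.exp (x ^ 2 / 2) *
    iteratedDeriv l (fun t => Real.exp (-t ^ 2 / 2)) x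

/-- The higher energy function of order `l` with normalizing constant `c`. -/
def heFun (l : ℕ) (c : ℝ) (x : ℝ) : ℝ :=
  c * hermiteFun l x ^ 2 * Real.exp (-x ^ 2 / 2)

/-- `c` is the constant making `heFun l c` a probability density on `ℝ`. -/
def IsNormalizing (l : ℕ) (c : ℝ) : Prop :=
  0 < c ∧ (∫ x : ℝ, heFun l c x) = 1

/-- `(x n)_{n=1}^N` is an MIW sequence of `f` : strictly increasing, avoiding the
zeros of `f`, and satisfying the MIW recursion for `1 < n < N`. -/
def IsMIW (f : ℝ → ℝ) (N : ℕ) (x : ℕ → ℝ) : Prop :=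
  (∀ n, 1 ≤ n → n < N → x n < x (n + 1)) ∧
  (∀ n, 1 ≤ n → n ≤ N → f (x n) ≠ 0) ∧
  (∀ n, 1 < n → n < N →
    1 / (x (n + 1) - x n) - 1 / (x n - x (n - 1)) = deriv f (x n) / f (x n))

/-- Left boundary condition at `x_0 = -∞`. -/
def LeftBC (f : ℝ → ℝ) (x : ℕ → ℝ) : Prop :=
  1 / (x 2 - x 1) = deriv f (x 1) / f (x 1)

/-- Right boundary condition at `x_{N+1} = +∞`. -/
def RightBC (f : ℝ → ℝ) (N : ℕ) (x : ℕ → ℝ) : Prop :=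
  -(1 / (x N - x (N - 1))) = deriv f (x N) / f (x N)

/-- Right boundary condition at a point (`none` denoting `+∞`). -/
def RightBCAt (f : ℝ → ℝ) (N : ℕ) (x : ℕ → ℝ) : Option ℝ → Prop
  | none => -(1 / (x N - x (N - 1))) = deriv f (x N) / f (x N)
  | some b => x N < b ∧
      1 / (b - x N) - 1 / (x N - x (N - 1)) = deriv f (x N) / f (x N)

/-- `r 1 < ⋯ < r l` enumerates the zeros of `f`. -/
def ZeroEnum (f : ℝ → ℝ) (l : ℕ) (r : ℕ → ℝ) : Prop :=
  (∀ i j, 1 ≤ i → i < j → j ≤ l → r i < r j) ∧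
  {y : ℝ | f y = 0} = r '' Set.Icc 1 l

/-- Membership in the region `R_k = (r_k, r_{k+1})`, with the conventions
`r_0 = -∞` and `r_{l+1} = +∞`. -/
def InRegion (l : ℕ) (r : ℕ → ℝ) (k : ℕ) (t : ℝ) : Prop :=
  (k = 0 ∨ r k < t) ∧ (k = l ∨ t < r (k + 1))

/-- The region `R_k` as a subset of `ℝ`. -/
def regionSet (l : ℕ) (r : ℕ → ℝ) (k : ℕ) : Set ℝ := {t | InRegion l r k t}

/-- The number of points of `(x n)_{n=1}^N` lying in region `R_k`. -/
def regionCount (l : ℕ) (r : ℕ → ℝ) (N : ℕ) (x : ℕ → ℝ) (k : ℕ) : ℕ :=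
  Set.ncard {n : ℕ | n ∈ Set.Icc 1 N ∧ InRegion l r k (x n)}

/-- `n(t) = max {0 ≤ k ≤ N : x_k ≤ t}` (convention `x_0 = -∞`); for an increasing
sequence this is the number of points among `x_1, …, x_N` that are `≤ t`. -/
def nIdx (N : ℕ) (x : ℕ → ℝ) (t : ℝ) : ℕ :=
  Set.ncard {n : ℕ | n ∈ Set.Icc 1 N ∧ x n ≤ t}

/-- `1/(x_{n+1}-x_n) - 1/(x_n-x_{n-1})`, with the conventions `x_0 = -∞`,
`x_{N+1} = +∞` (so the corresponding reciprocals vanish). -/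
def gapTerm (N : ℕ) (x : ℕ → ℝ) (n : ℕ) : ℝ :=
  (if n < N then 1 / (x (n + 1) - x n) else 0) -
    (if 1 < n then 1 / (x n - x (n - 1)) else 0)

/-- The MIW energy `H(x_1,…,x_N)`. -/
def Hfun (N : ℕ) (x : ℕ → ℝ) : ℝ :=
  ∑ n ∈ Finset.Icc 1 N, x n ^ 2 + ∑ n ∈ Finset.Icc 1 N, gapTerm N x n ^ 2

/-- Partial derivative `∂H/∂x_n` evaluated at the configuration `x`. -/
def partialH (N : ℕ) (x : ℕ → ℝ) (n : ℕ) : ℝ :=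
  deriv (fun s => Hfun N (Function.update x n s)) (x n)

/-- The empirical distribution `(1/N) ∑_{n=1}^N δ_{x_n}`. -/
def empDist (N : ℕ) (x : ℕ → ℝ) : Measure ℝ :=
  (N : ENNReal)⁻¹ • ∑ n ∈ Finset.Icc 1 N, Measure.dirac (x n)

/-- The probability measure on `S` with density proportional to `f`. -/
def densMeasure (f : ℝ → ℝ) (S : Set ℝ) : Measure ℝ :=
  (volume.restrict S).withDensity fun t => ENNReal.ofReal (f t / ∫ u in S, f u)

/-- The Stein solution `g_h(x) = (1/f(x)) ∫_a^x f(t)(h(t) - E_P[h]) dt`, where the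
integral runs over the part of `S` to the left of `x`. -/
def steinG (f : ℝ → ℝ) (S : Set ℝ) (h : ℝ → ℝ) (x : ℝ) : ℝ :=
  (1 / f x) * ∫ t in S ∩ Set.Iio x, f t * (h t - ∫ s, h s ∂(densMeasure f S))

/-- The intermediate density `ρ(t) = 1/((N-1)(x_{n(t)+1} - x_{n(t)}))` on `(x_1, x_N)`. -/
def interDens (N : ℕ) (x : ℕ → ℝ) (t : ℝ) : ℝ :=
  Set.indicator (Set.Ioo (x 1) (x N))
    (fun u => 1 / (((N : ℝ) - 1) * (x (nIdx N x u + 1) - x (nIdx N x u)))) t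

/-- The intermediate distribution `R` with density `ρ`. -/
def interDist (N : ℕ) (x : ℕ → ℝ) : Measure ℝ :=
  volume.withDensity fun t => ENNReal.ofReal (interDens N x t)

open Polynomial in
/-- The quotient `q'/q` is bounded on a closed right half-line free of zeros of `q`. -/
lemma logDeriv_bounded (q : ℝ[X]) (hq : q ≠ 0) (u : ℝ) (h0 : ∀ t, u ≤ t → q.eval t ≠ 0) :
    ∃ C : ℝ, ∀ t, u ≤ t → |q.derivative.eval t / q.eval t| ≤ C := by
  have hlim := Polynomial.div_tendsto_atTop_zero_of_degree_lt _ q (Polynomial.degree_derivative_lt hq)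
  have hev : ∀ᶠ t in atTop, |q.derivative.eval t / q.eval t| < 1 := by
    have := hlim.abs
    rw [abs_zero] at this
    exact this.eventually_lt_const one_pos
  obtain ⟨A, hA⟩ := eventually_atTop.1 hev
  have hcont : ContinuousOn (fun t => q.derivative.eval t / q.eval t) (Icc u A) :=
    q.derivative.continuous.continuousOn.div q.continuous.continuousOn fun t ht => h0 t ht.1
  obtain ⟨C, hC⟩ := isCompact_Icc.exists_bound_of_continuousOn hcont
  refine ⟨max C 1, fun t ht => ?_⟩
  rcases le_total t A with h | h
  · exact (hC t ⟨ht, h⟩).trans (le_max_left _ _)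
  · exact (hA t h).le.trans (le_max_right _ _)

open Polynomial in
/-- The pole of `p'/p` at a zero `u` of `p` has positive residue, so it only destroys the upper
bound near `u`, never the lower one. -/
lemma logDeriv_bounds (p : ℝ[X]) (hp : p ≠ 0) (u : ℝ) (h0 : ∀ t, u < t → p.eval t ≠ 0) :
    ∃ C : ℝ, (∀ t, u < t → -C ≤ p.derivative.eval t / p.eval t) ∧
      ∀ t, u + 1 < t → p.derivative.eval t / p.eval t ≤ C := by
  obtain ⟨q, hpq, hdvd⟩ := exists_eq_pow_rootMultiplicity_mul_and_not_dvd p hp u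
  set m := rootMultiplicity u p
  have hq0 : ∀ t, u ≤ t → q.eval t ≠ 0 := by
    intro t ht hqt
    rcases ht.eq_or_lt with rfl | ht
    · exact hdvd (dvd_iff_isRoot.2 hqt)
    · exact h0 t ht (by rw [hpq, eval_mul, hqt, mul_zero])
  have hq : q ≠ 0 := by
    rintro rfl
    simp at hdvd
  obtain ⟨C, hC⟩ := logDeriv_bounded q hq u hq0
  have key : ∀ t, u < t → p.derivative.eval t / p.eval t =
      m / (t - u) + q.derivative.eval t / q.eval t := by
    intro t ht
    have h1 : t - u ≠ 0 := (sub_pos.2 ht).ne'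
    have h2 := hq0 t ht.le
    rw [hpq]
    rcases hm : m with _ | k
    · simp
    · simp only [derivative_mul, derivative_X_sub_C_pow, eval_add, eval_mul, eval_pow, eval_sub,
        eval_X, eval_C, Nat.add_sub_cancel]
      field_simp
      push_cast
      ring
  refine ⟨m + C, fun t ht => ?_, fun t ht => ?_⟩
  · rw [key t ht]
    have h1 := (abs_le.1 (hC t ht.le)).1
    have h2 : (0 : ℝ) ≤ m / (t - u) := div_nonneg m.cast_nonneg (sub_pos.2 ht).le
    have h3 : (0 : ℝ) ≤ m := m.cast_nonneg
    linarith
  · have ht' : u < t := by linarith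
    rw [key t ht']
    have h1 := (abs_le.1 (hC t ht'.le)).2
    have h2 : (m : ℝ) / (t - u) ≤ m := div_le_self m.cast_nonneg (by linarith)
    linarith

/-- Since each term of the sum is at most `K`, `K` times the `i`-th gap from the right is
at least `1 / i`; these bounds add up to a harmonic number. -/
lemma harmonic_le_mul (h : ℝ → ℝ) (N : ℕ) (x : ℕ → ℝ) (K : ℝ)
    (hinc : ∀ n, 1 ≤ n → n < N → x n < x (n + 1))
    (hle : ∀ n, 1 ≤ n → n ≤ N → h (x n) ≤ K)
    (hrec : ∀ n, 1 ≤ n → n < N →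
      1 / (x (n + 1) - x n) = ∑ k ∈ Finset.Icc (n + 1) N, h (x k)) :
    ∀ j, j < N → (harmonic j : ℝ) ≤ K * (x N - x (N - j)) := by
  intro j
  induction j with
  | zero => simp
  | succ j ih =>
    intro hj
    have ih := ih (by omega)
    have hr := hrec (N - (j + 1)) (by omega) (by omega)
    have hg := sub_pos.2 (hinc (N - (j + 1)) (by omega) (by omega))
    have he : N - (j + 1) + 1 = N - j := by omega
    rw [he] at hr hg
    have hs : ∑ k ∈ Finset.Icc (N - j) N, h (x k) ≤ ((j + 1 : ℕ) : ℝ) * K := by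
      have := Finset.sum_le_card_nsmul (Finset.Icc (N - j) N) (fun k => h (x k)) K (by
        intro k hk
        rw [Finset.mem_Icc] at hk
        exact hle k (by omega) hk.2)
      rw [Nat.card_Icc, show N + 1 - (N - j) = j + 1 by omega, nsmul_eq_mul] at this
      exact this
    rw [← hr, div_le_iff₀ hg] at hs
    have hstep : ((j + 1 : ℕ) : ℝ)⁻¹ ≤ K * (x (N - j) - x (N - (j + 1))) := by
      rw [inv_le_iff_one_le_mul₀ (by positivity)]
      linarith
    rw [harmonic_succ]
    push_cast at hstep ⊢
    linarith

/-- The bound on the last gap uses only that `h t - t` is bounded above on `(u, ∞)` and bounded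
below on `(u + 1, ∞)`, which lets it serve for both ends. The conclusion also records `2 ≤ N`, so
that the truncated subtraction `N - 1` is harmless for its users. -/
lemma gap_bound (h : ℝ → ℝ) (u C : ℝ) (hub : ∀ t, u < t → h t ≤ t + C)
    (hlb : ∀ t, u + 1 < t → t - C ≤ h t) :
    ∃ N0 : ℕ, ∀ N, N0 ≤ N → 2 ≤ N ∧ ∀ x : ℕ → ℝ,
      (∀ n, 1 ≤ n → n < N → x n < x (n + 1)) →
      (∀ n, 1 ≤ n → n ≤ N → u < x n) →
      (∀ n, 1 ≤ n → n < N →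
        1 / (x (n + 1) - x n) = ∑ k ∈ Finset.Icc (n + 1) N, h (x k)) →
      x N - x (N - 1) < 2 / Real.sqrt (Real.log N) := by
  -- Enlarging `C` allows `x_N - u ≤ x_N + D` and makes `√(log N) > 4 D` the only size condition.
  set D := max C (|u| + 1)
  have hCD : C ≤ D := le_max_left _ _
  have huD : |u| + 1 ≤ D := le_max_right _ _
  have hu1 := neg_abs_le u
  have hu2 := le_abs_self u
  have hu3 := abs_nonneg u
  have hlim : Tendsto (fun N : ℕ => Real.sqrt (Real.log N)) atTop atTop :=
    Real.tendsto_sqrt_atTop.comp (Real.tendsto_log_atTop.comp tendsto_natCast_atTop_atTop)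
  obtain ⟨N1, hN1⟩ := eventually_atTop.1 (hlim.eventually_gt_atTop (4 * D))
  refine ⟨max N1 2, fun N hN => ⟨(le_max_right _ _).trans hN, ?_⟩⟩
  intro x hinc hux hrec
  have h2 : 2 ≤ N := (le_max_right _ _).trans hN
  have hL := hN1 N ((le_max_left _ _).trans hN)
  set L := Real.sqrt (Real.log N)
  have hL2 : L ^ 2 = Real.log N := Real.sq_sqrt (Real.log_natCast_nonneg N)
  have hg := hinc (N - 1) (by omega) (by omega)
  have hr := hrec (N - 1) (by omega) (by omega)
  rw [show N - 1 + 1 = N by omega] at hg hr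
  rw [Finset.Icc_self, Finset.sum_singleton] at hr
  have hg' := sub_pos.2 hg
  have hmono : ∀ n, 1 ≤ n → n ≤ N → x n ≤ x N := by
    intro n hn hnN
    induction hnN using Nat.decreasingInduction with
    | self => exact le_rfl
    | of_succ k hk ih => exact (hinc k hn hk).le.trans (ih (by omega))
  have hle : ∀ n, 1 ≤ n → n ≤ N → h (x n) ≤ x N + D := fun n hn hnN => by
    linarith [hub _ (hux n hn hnN), hmono n hn hnN]
  have hK : 0 < x N + D :=
    (one_div_pos.2 hg').trans_le (hr.trans_le (hle N (by omega) le_rfl))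
  have hH := harmonic_le_mul h N x (x N + D) hinc hle hrec (N - 1) (by omega)
  have hlog : Real.log N ≤ harmonic (N - 1) := by
    have := log_add_one_le_harmonic (N - 1)
    rwa [show N - 1 + 1 = N by omega] at this
  rw [show N - (N - 1) = 1 by omega] at hH
  have hx1 := hux 1 le_rfl (by omega)
  have hsq : L ^ 2 ≤ (x N + D) ^ 2 := by
    have : (x N + D) * (x N - x 1) ≤ (x N + D) * (x N + D) :=
      mul_le_mul_of_nonneg_left (by linarith) hK.le
    rw [hL2]
    linarith
  have hLx : L ≤ x N + D := le_of_sq_le_sq hsq hK.le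
  have hh := hlb (x N) (by linarith)
  have hfin : L / 2 < 1 / (x N - x (N - 1)) := by rw [hr]; linarith
  rw [lt_div_iff₀ hg'] at hfin
  rw [lt_div_iff₀ (by linarith)]
  linarith

/-- The Hermite polynomial with real coefficients. -/
def hermiteR (l : ℕ) : Polynomial ℝ := (Polynomial.hermite l).map (Int.castRingHom ℝ)

lemma hermiteFun_eq (l : ℕ) (x : ℝ) : hermiteFun l x = (hermiteR l).eval x := by
  rw [hermiteR, Polynomial.eval_map, ← algebraMap_int_eq, ← Polynomial.aeval_def,
    Polynomial.hermite_eq_deriv_gaussian']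
  rw [hermiteFun, iteratedDeriv_eq_iterate]
  have : (fun t : ℝ => Real.exp (-t ^ 2 / 2)) = fun t => Real.exp (-(t ^ 2 / 2)) := by
    ext t; rw [neg_div]
  rw [this]
  ring

lemma hermiteR_ne_zero (l : ℕ) : hermiteR l ≠ 0 :=
  ((Polynomial.hermite_monic l).map _).ne_zero

lemma heFun_eq_zero_iff (l : ℕ) (c : ℝ) (hc : 0 < c) (t : ℝ) :
    heFun l c t = 0 ↔ (hermiteR l).eval t = 0 := by
  simp [heFun, hermiteFun_eq, hc.ne', Real.exp_ne_zero]

lemma deriv_heFun_div (l : ℕ) (c : ℝ) (hc : 0 < c) (t : ℝ) (ht : (hermiteR l).eval t ≠ 0) :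
    deriv (heFun l c) t / heFun l c t =
      -t + 2 * ((hermiteR l).derivative.eval t / (hermiteR l).eval t) := by
  have hE : HasDerivAt (fun t : ℝ => Real.exp (-t ^ 2 / 2)) (Real.exp (-t ^ 2 / 2) * (-t)) t := by
    have h1 : HasDerivAt (fun t : ℝ => -t ^ 2 / 2) (-t) t := by
      have := ((hasDerivAt_pow 2 t).neg.div_const 2)
      refine this.congr_deriv ?_
      push_cast
      ring
    exact h1.exp
  have hd := ((((hermiteR l).hasDerivAt t).pow 2).const_mul c).mul hE
  have hf : heFun l c = fun t => c * (hermiteR l).eval t ^ 2 * Real.exp (-t ^ 2 / 2) := by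
    ext t; rw [heFun, hermiteFun_eq]
  rw [hf]
  have hderiv := HasDerivAt.deriv hd
  have hcne := hc.ne'
  have hexp := Real.exp_ne_zero (-t ^ 2 / 2)
  -- `hderiv` is about a product of functions, which agrees with the goal only definitionally.
  refine (congrArg (· / _) hderiv).trans ?_
  simp only [Pi.pow_apply]
  field_simp
  ring

theorem MIW_extreme_gap_bound (l : ℕ) (c : ℝ) (hc : IsNormalizing l c)
    (u v : ℝ)
    (hu : (l = 0 ∧ u = 0) ∨
      (1 ≤ l ∧ heFun l c u = 0 ∧ ∀ t, u < t → heFun l c t ≠ 0))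
    (hv : (l = 0 ∧ v = 0) ∨
      (1 ≤ l ∧ heFun l c v = 0 ∧ ∀ t, t < v → heFun l c t ≠ 0)) :
    ∃ N0 : ℕ, ∀ N, N0 ≤ N →
      (∀ x : ℕ → ℝ,
        (∀ n, 1 ≤ n → n < N → x n < x (n + 1)) →
        (∀ n, 1 ≤ n → n ≤ N → u < x n) →
        (∀ n, 1 ≤ n → n < N →
          1 / (x (n + 1) - x n)
            = ∑ k ∈ Finset.Icc (n + 1) N,
                -(deriv (heFun l c) (x k) / heFun l c (x k))) →
        x N - x (N - 1) < 2 / Real.sqrt (Real.log N)) ∧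
      (∀ x : ℕ → ℝ,
        (∀ n, 1 ≤ n → n < N → x n < x (n + 1)) →
        (∀ n, 1 ≤ n → n ≤ N → x n < v) →
        (∀ n, 1 ≤ n → n < N →
          1 / (x (n + 1) - x n)
            = ∑ k ∈ Finset.Icc 1 n, deriv (heFun l c) (x k) / heFun l c (x k)) →
        x 2 - x 1 < 2 / Real.sqrt (Real.log N)) := by
  have hc0 := hc.1
  have hpu : ∀ t, u < t → (hermiteR l).eval t ≠ 0 := by
    intro t ht
    rcases hu with ⟨rfl, -⟩ | ⟨-, -, hu⟩
    · simp [hermiteR]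
    · exact fun h => hu t ht ((heFun_eq_zero_iff l c hc0 t).2 h)
  have hpv : ∀ t, t < v → (hermiteR l).eval t ≠ 0 := by
    intro t ht
    rcases hv with ⟨rfl, -⟩ | ⟨-, -, hv⟩
    · simp [hermiteR]
    · exact fun h => hv t ht ((heFun_eq_zero_iff l c hc0 t).2 h)
  obtain ⟨C, hC1, hC2⟩ := logDeriv_bounds (hermiteR l) (hermiteR_ne_zero l) u hpu
  obtain ⟨N1, hN1⟩ := gap_bound (fun t => -(deriv (heFun l c) t / heFun l c t)) u (2 * C)
    (fun t ht => by
      rw [deriv_heFun_div l c hc0 t (hpu t ht)]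
      linarith [hC1 t ht])
    (fun t ht => by
      rw [deriv_heFun_div l c hc0 t (hpu t (by linarith))]
      linarith [hC2 t ht])
  -- The left end is the right end for the reflected polynomial `p(-X)`.
  set q := (hermiteR l).comp (-Polynomial.X) with hq
  have hqe : ∀ t, q.eval t = (hermiteR l).eval (-t) := fun t => by simp [hq]
  have hqd : ∀ t, q.derivative.eval t = -(hermiteR l).derivative.eval (-t) := fun t => by
    simp [hq, Polynomial.derivative_comp]
  have hqv : ∀ t, -v < t → q.eval t ≠ 0 := fun t ht => by
    rw [hqe]
    exact hpv _ (by linarith)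
  have hq0 : q ≠ 0 := by
    intro h0
    exact hqv (-v + 1) (by linarith) (by rw [h0, Polynomial.eval_zero])
  obtain ⟨D, hD1, hD2⟩ := logDeriv_bounds q hq0 (-v) hqv
  have hrefl : ∀ t, -v < t → deriv (heFun l c) (-t) / heFun l c (-t) =
      t - 2 * (q.derivative.eval t / q.eval t) := fun t ht => by
    rw [deriv_heFun_div l c hc0 (-t) (hpv _ (by linarith)), hqe, hqd]
    ring
  obtain ⟨N2, hN2⟩ := gap_bound (fun t => deriv (heFun l c) (-t) / heFun l c (-t)) (-v) (2 * D)
    (fun t ht => by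
      rw [hrefl t ht]
      linarith [hD1 t ht])
    (fun t ht => by
      rw [hrefl t (by linarith)]
      linarith [hD2 t ht])
  refine ⟨max N1 N2, fun N hN => ⟨(hN1 N ((le_max_left _ _).trans hN)).2, ?_⟩⟩
  intro x hinc hxv hrec
  obtain ⟨h2, hmain⟩ := hN2 N ((le_max_right _ _).trans hN)
  have := hmain (fun n => -x (N + 1 - n)) ?_ ?_ ?_
  · simp only [show N + 1 - N = 1 by omega, show N + 1 - (N - 1) = 2 by omega] at this
    linarith
  · intro n hn hnN
    have := hinc (N - n) (by omega) (by omega)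
    rw [show N - n + 1 = N + 1 - n by omega] at this
    simp only [show N + 1 - (n + 1) = N - n by omega]
    linarith
  · intro n hn hnN
    have := hxv (N + 1 - n) (by omega) (by omega)
    linarith
  · intro n hn hnN
    have := hrec (N - n) (by omega) (by omega)
    rw [show N - n + 1 = N + 1 - n by omega] at this
    simp only [show N + 1 - (n + 1) = N - n by omega, neg_neg]
    rw [show -x (N - n) - -x (N + 1 - n) = x (N + 1 - n) - x (N - n) by ring, this]
    refine Finset.sum_nbij' (fun k => N + 1 - k) (fun k => N + 1 - k) ?_ ?_ ?_ ?_ ?_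
    · intro k hk; simp only [Finset.mem_Icc] at hk ⊢; omega
    · intro k hk; simp only [Finset.mem_Icc] at hk ⊢; omega
    · intro k hk; simp only [Finset.mem_Icc] at hk; omega
    · intro k hk; simp only [Finset.mem_Icc] at hk; omega
    · intro k hk
      simp only [Finset.mem_Icc] at hk
      rw [show N + 1 - (N + 1 - k) = k by omega]
end
end

section
/- Let f be a higher energy function, strictly positive on an interval (a,b), where a is a zero of f or a = −∞ and b is the next zero of f to the right or b = +∞, and let P be the probability distribution on (a,b) with density proportional to f. Let (x_n)_{n=1}^N (N ≥ 3) be a strictly increasing sequence in (a,b) satisfying 1/(x_{n+1}−x_n) − 1/(x_n−x_{n−1}) = f'(x_n)/f(x_n) for all 1 < n < N, and let R be the probability distribution on (x_1, x_N) with density ρ(t) = 1/((N−1)(x_{n(t)+1} − x_{n(t)})), where n(t) = max{1 ≤ k ≤ N : x_k ≤ t}. Then for every β ∈ [0,1] and every differentiable 1-Lipschitz function h, |E_R[h] − E_P[h]| ≤ (1/(N−1)) · ( | g_h(x_N)/(x_N − x_{N−1}) − g_h(x_1)/(x_2 − x_1) + β·(f'(x_N)/f(x_N))·g_h(x_N)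 + (1−β)·(f'(x_1)/f(x_1))·g_h(x_1) | + (x_N − x_1)·(1 + sup_{x ∈ (x_1, x_N)} |g_h''(x)|) ). -/
/-!
Write `f` for the density, `u = f' / f`, `g` for the Stein solution and `E = E_P[h]`. On `S` the
Stein equation `g' + u g = h - E` holds (`hasDerivAt_steinG`); it needs `f (h - E)` to be
integrable, which follows from `f` being a polynomial times a Gaussian, and it makes `g'`
differentiable.

The distribution `R` gives each gap `[x_n, x_{n+1}]` mass `1 / (N - 1)`, uniformly spread
(`integral_interDist`), so `(N - 1) (E_R[h] - E)` is the sum over the gaps of the average of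
`h - E`. On each gap this average is replaced by `β (h(x_{n+1}) - E) + (1 - β) (h(x_n) - E)`, at a
cost of at most the gap length since `h` is 1-Lipschitz. By the Stein equation the replacement is
the `β`-combination of `g' + u g` at the two endpoints. The `β`-combination of `g'` is within
`M` times the gap length of the slope of the chord of `g`
(`abs_convexComb_deriv_sub_slope_le`). Finally the recursion for the points and summation by
parts (`sum_by_parts`) collapse the sum of the chord slopes and the terms `u g` to exactly the
boundary expression of the bound, while the gap lengths telescope to `x_N - x_1`.
-/

open MeasureTheory Filter Set

noncomputable section

/-! ### The higher energy function -/

lemma hermiteFun_eq_aeval (l : ℕ) (t : ℝ) :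
    hermiteFun l t = Polynomial.aeval t (Polynomial.hermite l) := by
  have e : (fun y : ℝ => Real.exp (-y ^ 2 / 2)) = fun y => Real.exp (-(y ^ 2 / 2)) := by
    funext y; rw [neg_div]
  rw [Polynomial.hermite_eq_deriv_gaussian', hermiteFun, iteratedDeriv_eq_iterate, e]
  ring

lemma contDiff_heFun (l : ℕ) (c : ℝ) : ContDiff ℝ 2 (heFun l c) := by
  have e : heFun l c = fun t => c * (Polynomial.aeval t (Polynomial.hermite l)) ^ 2
      * Real.exp (-t ^ 2 / 2) := by
    funext t; rw [heFun, hermiteFun_eq_aeval]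
  rw [e]
  have hp : ContDiff ℝ 2 fun t : ℝ => Polynomial.aeval t (Polynomial.hermite l) :=
    Polynomial.contDiff_aeval _ _
  fun_prop

lemma integrable_polynomial_mul_gaussian (q : Polynomial ℝ) :
    Integrable fun t : ℝ => q.eval t * Real.exp (-t ^ 2 / 2) := by
  induction q using Polynomial.induction_on' with
  | add p q hp hq =>
    simp only [Polynomial.eval_add, add_mul]
    exact hp.add hq
  | monomial n a =>
    have := (integrable_rpow_mul_exp_neg_mul_sq (b := 1 / 2) (by norm_num) (s := n)
      (by linarith [n.cast_nonneg (α := ℝ)])).const_mul a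
    refine this.congr (Eventually.of_forall fun t => ?_)
    simp only [Polynomial.eval_monomial, Real.rpow_natCast, mul_assoc]
    ring_nf

/-- Holds because `|h t - E| ≤ (|h 0 - E| + 1) (1 + t ^ 2)` and `heFun l c` is a polynomial
times a Gaussian. -/
lemma integrable_heFun_mul (l : ℕ) (c E : ℝ) (h : ℝ → ℝ) (hlip : LipschitzWith 1 h) :
    Integrable fun t => heFun l c t * (h t - E) := by
  set q : Polynomial ℝ := Polynomial.C (c * (|h 0 - E| + 1)) * (1 + Polynomial.X ^ 2) *
    ((Polynomial.hermite l).map (Int.castRingHom ℝ)) ^ 2 with hq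
  refine (integrable_polynomial_mul_gaussian q).mono
    (((contDiff_heFun l c).continuous.mul
      (hlip.continuous.sub continuous_const)).aestronglyMeasurable)
    (Eventually.of_forall fun t => ?_)
  have e : q.eval t * Real.exp (-t ^ 2 / 2)
      = heFun l c t * ((|h 0 - E| + 1) * (1 + t ^ 2)) := by
    rw [heFun, hermiteFun_eq_aeval]
    simp only [hq, Polynomial.eval_mul, Polynomial.eval_C, Polynomial.eval_add,
      Polynomial.eval_one, Polynomial.eval_pow, Polynomial.eval_X, Polynomial.eval_map,
      Polynomial.aeval_def, algebraMap_int_eq]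
    ring
  rw [e, norm_mul, norm_mul]
  refine mul_le_mul_of_nonneg_left ?_ (norm_nonneg _)
  have h1 : |h t - h 0| ≤ |t| := by
    simpa [Real.dist_eq] using hlip.dist_le_mul t 0
  have h2 : |h t - E| ≤ |h t - h 0| + |h 0 - E| := abs_sub_le _ _ _
  have h3 : |t| ≤ 1 + t ^ 2 := by
    rcases abs_cases t with ⟨a, _⟩ | ⟨a, _⟩ <;> rw [a] <;>
      nlinarith [sq_nonneg (t - 1), sq_nonneg (t + 1)]
  rw [Real.norm_eq_abs, Real.norm_eq_abs,
    abs_of_nonneg (by positivity : 0 ≤ (|h 0 - E| + 1) * (1 + t ^ 2))]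
  nlinarith [abs_nonneg (h 0 - E), mul_nonneg (abs_nonneg (h 0 - E)) (sq_nonneg t)]

/-! ### The Stein equation -/

lemma hasDerivAt_setIntegral_inter_Iio {φ : ℝ → ℝ} (hφ : Continuous φ) (hint : Integrable φ)
    {S : Set ℝ} (hS : IsOpen S) {y : ℝ} (hy : y ∈ S) :
    HasDerivAt (fun z => ∫ t in S ∩ Set.Iio z, φ t) (φ y) y := by
  have hi : Integrable (S.indicator φ) := hint.indicator hS.measurableSet
  have e : (fun z => ∫ t in S ∩ Set.Iio z, φ t)
      = fun z => (∫ t in (0 : ℝ)..z, S.indicator φ t) + ∫ t in Set.Iic (0 : ℝ), S.indicator φ t := by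
    funext z
    rw [← intervalIntegral.integral_Iic_sub_Iic hi.integrableOn hi.integrableOn, sub_add_cancel,
      integral_Iic_eq_integral_Iio, setIntegral_indicator hS.measurableSet, Set.inter_comm]
  have hev : S.indicator φ =ᶠ[nhds y] φ := by
    filter_upwards [hS.mem_nhds hy] with t ht using Set.indicator_of_mem ht φ
  have key := intervalIntegral.integral_hasDerivAt_right (a := (0 : ℝ)) (b := y)
    hi.intervalIntegrable (hi.aestronglyMeasurable.stronglyMeasurableAtFilter)
    (hφ.continuousAt.congr hev.symm)
  rw [Set.indicator_of_mem hy] at key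
  rw [e]
  exact key.add_const _

/-- The Stein equation `g' + (f' / f) g = h - E_P[h]` on `S`, solved for `g'`. -/
lemma hasDerivAt_steinG (l : ℕ) (c : ℝ) {S : Set ℝ} (hS : IsOpen S)
    (hpos : ∀ t ∈ S, 0 < heFun l c t) {h : ℝ → ℝ} (hlip : LipschitzWith 1 h)
    {y : ℝ} (hy : y ∈ S) :
    HasDerivAt (steinG (heFun l c) S h)
      (h y - (∫ s, h s ∂(densMeasure (heFun l c) S))
        - deriv (heFun l c) y / heFun l c y * steinG (heFun l c) S h y) y := by
  set E := ∫ s, h s ∂(densMeasure (heFun l c) S)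
  have hF := hasDerivAt_setIntegral_inter_Iio
    ((contDiff_heFun l c).continuous.mul (hlip.continuous.sub continuous_const))
    (integrable_heFun_mul l c E h hlip) hS hy
  have hne := (hpos y hy).ne'
  have hf : HasDerivAt (heFun l c) (deriv (heFun l c) y) y :=
    (((contDiff_heFun l c).differentiable (by norm_num)) y).hasDerivAt
  have hG : HasDerivAt (steinG (heFun l c) S h)
      ((0 * heFun l c y - 1 * deriv (heFun l c) y) / heFun l c y ^ 2
          * (∫ t in S ∩ Set.Iio y, heFun l c t * (h t - E))
        + 1 / heFun l c y * (heFun l c y * (h y - E))) y :=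
    ((hasDerivAt_const y (1 : ℝ)).div hf hne).mul hF
  refine hG.congr_deriv ?_
  rw [steinG]
  field_simp
  ring

lemma differentiableAt_deriv_steinG (l : ℕ) (c : ℝ) {S : Set ℝ} (hS : IsOpen S)
    (hpos : ∀ t ∈ S, 0 < heFun l c t) {h : ℝ → ℝ} (hdiff : Differentiable ℝ h)
    (hlip : LipschitzWith 1 h) {y : ℝ} (hy : y ∈ S) :
    DifferentiableAt ℝ (deriv (steinG (heFun l c) S h)) y := by
  have hf := contDiff_heFun l c
  have hf' : Differentiable ℝ (deriv (heFun l c)) :=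
    hf.differentiable_deriv_two
  have hg := (hasDerivAt_steinG l c hS hpos hlip hy).differentiableAt
  have hev : deriv (steinG (heFun l c) S h) =ᶠ[nhds y] fun z =>
      h z - (∫ s, h s ∂(densMeasure (heFun l c) S))
        - deriv (heFun l c) z / heFun l c z * steinG (heFun l c) S h z := by
    filter_upwards [hS.mem_nhds hy] with z hz using (hasDerivAt_steinG l c hS hpos hlip hz).deriv
  refine DifferentiableAt.congr_of_eventuallyEq ?_ hev
  exact ((hdiff y).sub_const _).sub
    (((hf' y).div (hf.differentiable (by norm_num) y) (hpos y hy).ne').mul hg)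

/-! ### Errors on a single gap -/

/-- A convex combination of the endpoint derivatives differs from the slope of the chord by at
most `M (q - p)`: the slope is `g' ξ` for some `ξ` between `p` and `q`, and `g'` is
`M`-Lipschitz. -/
lemma abs_convexComb_deriv_sub_slope_le {g : ℝ → ℝ} {p q M β : ℝ} (hpq : p < q)
    (hβ : β ∈ Set.Icc (0 : ℝ) 1)
    (hg : ∀ t ∈ Set.Icc p q, DifferentiableAt ℝ g t)
    (hg' : ∀ t ∈ Set.Icc p q, DifferentiableAt ℝ (deriv g) t)
    (hM : ∀ t ∈ Set.Ioo p q, |deriv (deriv g) t| ≤ M) :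
    |β * deriv g q + (1 - β) * deriv g p - (g q - g p) / (q - p)| ≤ M * (q - p) := by
  have mv : ∀ s t, p ≤ s → s < t → t ≤ q → |deriv g t - deriv g s| ≤ M * (t - s) := by
    intro s t hs hst ht
    obtain ⟨η, hη, e⟩ := exists_deriv_eq_slope (deriv g) hst
      (fun z hz => (hg' z ⟨hs.trans hz.1, hz.2.trans ht⟩).continuousAt.continuousWithinAt)
      (fun z hz => (hg' z ⟨hs.trans hz.1.le, hz.2.le.trans ht⟩).differentiableWithinAt)
    have := hM η ⟨hs.trans_lt hη.1, hη.2.trans_le ht⟩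
    rwa [e, abs_div, abs_of_pos (sub_pos.2 hst), div_le_iff₀ (sub_pos.2 hst)] at this
  obtain ⟨ξ, hξ, e⟩ := exists_deriv_eq_slope g hpq
    (fun z hz => (hg z hz).continuousAt.continuousWithinAt)
    (fun z hz => (hg z ⟨hz.1.le, hz.2.le⟩).differentiableWithinAt)
  rw [← e]
  have hM0 : 0 ≤ M := (abs_nonneg _).trans (hM ξ hξ)
  have h1 := abs_le.1 (mv ξ q hξ.1.le hξ.2 le_rfl)
  have h2 := abs_le.1 (mv p ξ le_rfl hξ.1 hξ.2.le)
  have h3 : M * (q - ξ) ≤ M * (q - p) := by nlinarith [hξ.1]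
  have h4 : M * (ξ - p) ≤ M * (q - p) := by nlinarith [hξ.2]
  obtain ⟨b0, b1⟩ := hβ
  rw [abs_le]
  constructor <;> nlinarith

lemma abs_average_sub_convexComb_le {h : ℝ → ℝ} (hlip : LipschitzWith 1 h) {p q β : ℝ}
    (hpq : p < q) (hβ : β ∈ Set.Icc (0 : ℝ) 1) :
    |1 / (q - p) * (∫ t in p..q, h t) - (β * h q + (1 - β) * h p)| ≤ q - p := by
  have hd : 0 < q - p := sub_pos.2 hpq
  have e : 1 / (q - p) * (∫ t in p..q, h t) - (β * h q + (1 - β) * h p)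
      = 1 / (q - p) * ∫ t in p..q, (h t - (β * h q + (1 - β) * h p)) := by
    rw [intervalIntegral.integral_sub (hlip.continuous.intervalIntegrable _ _)
      intervalIntegrable_const, intervalIntegral.integral_const, smul_eq_mul]
    field_simp
  have hb : ‖∫ t in p..q, (h t - (β * h q + (1 - β) * h p))‖ ≤ (q - p) * |q - p| := by
    refine intervalIntegral.norm_integral_le_of_norm_le_const fun t ht => ?_
    rw [Set.uIoc_of_le hpq.le] at ht
    have h1 : |h t - h q| ≤ |t - q| := by simpa [Real.dist_eq] using hlip.dist_le_mul t q
    have h2 : |h t - h p| ≤ |t - p| := by simpa [Real.dist_eq] using hlip.dist_le_mul t p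
    rw [abs_of_nonpos (by linarith [ht.2] : t - q ≤ 0)] at h1
    rw [abs_of_pos (by linarith [ht.1] : 0 < t - p)] at h2
    have h1 := abs_le.1 (h1.trans (by linarith [ht.1] : _ ≤ q - p))
    have h2 := abs_le.1 (h2.trans (by linarith [ht.2] : _ ≤ q - p))
    obtain ⟨b0, b1⟩ := hβ
    rw [Real.norm_eq_abs, abs_le]
    constructor <;> nlinarith
  rw [abs_of_pos hd, Real.norm_eq_abs] at hb
  rw [e, abs_mul, abs_of_pos (by positivity : 0 < 1 / (q - p)), one_div_mul_eq_div,
    div_le_iff₀ hd]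
  exact hb

/-! ### The intermediate distribution -/

lemma lt_of_lt_index {N : ℕ} {x : ℕ → ℝ} (hmono : ∀ n, 1 ≤ n → n < N → x n < x (n + 1))
    {i j : ℕ} (hi : 1 ≤ i) (hij : i < j) (hj : j ≤ N) : x i < x j := by
  induction j, hij using Nat.le_induction with
  | base => exact hmono i hi hj
  | succ k hk ih => exact (ih (by omega)).trans (hmono k (by omega) (by omega))

lemma le_of_le_index {N : ℕ} {x : ℕ → ℝ} (hmono : ∀ n, 1 ≤ n → n < N → x n < x (n + 1))
    {i j : ℕ} (hi : 1 ≤ i) (hij : i ≤ j) (hj : j ≤ N) : x i ≤ x j := by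
  rcases hij.eq_or_lt with rfl | hlt
  · exact le_rfl
  · exact (lt_of_lt_index hmono hi hlt hj).le

lemma nIdx_eq {N : ℕ} {x : ℕ → ℝ} (hmono : ∀ n, 1 ≤ n → n < N → x n < x (n + 1))
    {n : ℕ} (h1 : 1 ≤ n) (hN : n < N) {t : ℝ} (ht : t ∈ Set.Ico (x n) (x (n + 1))) :
    nIdx N x t = n := by
  have e : {k : ℕ | k ∈ Set.Icc 1 N ∧ x k ≤ t} = ↑(Finset.Icc 1 n) := by
    ext k
    simp only [Set.mem_ofPred_eq, Set.mem_Icc, Finset.coe_Icc]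
    constructor
    · rintro ⟨⟨k1, k2⟩, hk⟩
      refine ⟨k1, ?_⟩
      by_contra hnk
      have := le_of_le_index hmono (by omega : 1 ≤ n + 1) (by omega : n + 1 ≤ k) k2
      linarith [ht.2]
    · rintro ⟨k1, k2⟩
      exact ⟨⟨k1, by omega⟩, (le_of_le_index hmono k1 k2 hN.le).trans ht.1⟩
  rw [nIdx, e, Set.ncard_coe_finset]
  simp

/-- Away from the point `x 1`, which the open interval in `interDens` excludes, the density of
`R` is the step function with value `1 / ((N - 1) (x (n + 1) - x n))` on `[x n, x (n + 1))`. -/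
lemma interDens_eq_sum {N : ℕ} (hN : 1 ≤ N) {x : ℕ → ℝ}
    (hmono : ∀ n, 1 ≤ n → n < N → x n < x (n + 1)) {t : ℝ} (ht : t ≠ x 1) :
    interDens N x t = ∑ n ∈ Finset.Ico 1 N, (Set.Ico (x n) (x (n + 1))).indicator
      (fun _ => 1 / (((N : ℝ) - 1) * (x (n + 1) - x n))) t := by
  by_cases hex : ∃ n ∈ Finset.Ico 1 N, t ∈ Set.Ico (x n) (x (n + 1))
  · obtain ⟨n, hn, htn⟩ := hex
    have hn' := Finset.mem_Ico.1 hn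
    have hI : t ∈ Set.Ioo (x 1) (x N) :=
      ⟨lt_of_le_of_ne ((le_of_le_index hmono le_rfl hn'.1 hn'.2.le).trans htn.1) ht.symm,
        htn.2.trans_le (le_of_le_index hmono (by omega) (by omega) le_rfl)⟩
    rw [Finset.sum_eq_single_of_mem n hn, interDens, Set.indicator_of_mem hI,
      Set.indicator_of_mem htn, nIdx_eq hmono hn'.1 hn'.2 htn]
    intro k hk hkn
    have hk' := Finset.mem_Ico.1 hk
    refine Set.indicator_of_notMem (fun htk => hkn ?_) _
    rw [← nIdx_eq hmono hk'.1 hk'.2 htk, nIdx_eq hmono hn'.1 hn'.2 htn]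
  · rw [Finset.sum_eq_zero fun n hn => Set.indicator_of_notMem (fun htn => hex ⟨n, hn, htn⟩) _]
    refine Set.indicator_of_notMem (fun hI => hex ?_) _
    -- the gap containing `t` starts at the last point that is `≤ t`
    have hbd : ∀ k, 1 ≤ k → k ≤ N → t < x k →
        ∃ n ∈ Finset.Ico 1 N, t ∈ Set.Ico (x n) (x (n + 1)) := by
      intro k hk
      induction k, hk using Nat.le_induction with
      | base => intro _ hlt; linarith [hI.1]
      | succ k hk ih =>
        intro hkN hlt
        by_cases h' : t < x k
        · exact ih (by omega) h'
        · exact ⟨k, Finset.mem_Ico.2 ⟨hk, by omega⟩, not_lt.1 h', hlt⟩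
    exact hbd N hN le_rfl hI.2

lemma integral_interDist {N : ℕ} (hN : 1 ≤ N) {x : ℕ → ℝ}
    (hmono : ∀ n, 1 ≤ n → n < N → x n < x (n + 1)) {h : ℝ → ℝ} (hcont : Continuous h) :
    ∫ t, h t ∂(interDist N x) = 1 / ((N : ℝ) - 1) *
      ∑ n ∈ Finset.Ico 1 N, 1 / (x (n + 1) - x n) * ∫ t in x n..x (n + 1), h t := by
  set ρ : ℝ → ℝ := fun t => ∑ n ∈ Finset.Ico 1 N, (Set.Ico (x n) (x (n + 1))).indicator
      (fun _ => 1 / (((N : ℝ) - 1) * (x (n + 1) - x n))) t with hρ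
  have hρm : Measurable ρ :=
    Finset.measurable_sum _ fun n _ => measurable_const.indicator measurableSet_Ico
  have hN' : (0 : ℝ) ≤ N - 1 := by
    have : (1 : ℝ) ≤ N := by exact_mod_cast hN
    linarith
  have hρ0 : ∀ t, 0 ≤ ρ t := fun t => Finset.sum_nonneg fun n hn =>
    Set.indicator_nonneg (fun _ _ => by
      have hn' := Finset.mem_Ico.1 hn
      have := sub_pos.2 (hmono n hn'.1 hn'.2)
      positivity) t
  have hae : (fun t => ENNReal.ofReal (interDens N x t)) =ᵐ[volume]
      fun t => ENNReal.ofReal (ρ t) := by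
    filter_upwards [Measure.ae_ne volume (x 1)] with t ht
    rw [interDens_eq_sum hN hmono ht]
  rw [interDist, withDensity_congr_ae hae,
    integral_withDensity_eq_integral_toReal_smul hρm.ennreal_ofReal
      (Eventually.of_forall fun _ => ENNReal.ofReal_lt_top)]
  have e : ∀ t, (ENNReal.ofReal (ρ t)).toReal • h t = ∑ n ∈ Finset.Ico 1 N,
      (Set.Ico (x n) (x (n + 1))).indicator
        (fun t => 1 / (((N : ℝ) - 1) * (x (n + 1) - x n)) * h t) t := by
    intro t
    rw [ENNReal.toReal_ofReal (hρ0 t), smul_eq_mul, hρ, Finset.sum_mul]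
    refine Finset.sum_congr rfl fun n _ => ?_
    by_cases ht : t ∈ Set.Ico (x n) (x (n + 1)) <;> simp [ht]
  simp_rw [e]
  rw [integral_finsetSum, Finset.mul_sum]
  · refine Finset.sum_congr rfl fun n hn => ?_
    have hn' := Finset.mem_Ico.1 hn
    rw [integral_indicator measurableSet_Ico, integral_const_mul,
      intervalIntegral.integral_of_le (hmono n hn'.1 hn'.2).le, integral_Ico_eq_integral_Ioc,
      ← mul_assoc, one_div_mul_one_div]
  · intro n _
    rw [integrable_indicator_iff measurableSet_Ico]
    exact ((hcont.const_mul _).continuousOn.integrableOn_Icc).mono_set Set.Ico_subset_Icc_self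

/-! ### Summation by parts and the bound -/

/-- Summation by parts: the recursion for the points turns the `β`-weighted sum of `u g` into
boundary terms minus the sum of the chord slopes of `g`. -/
lemma sum_by_parts {N : ℕ} {x u g : ℕ → ℝ} (β : ℝ)
    (hrel : ∀ n, 1 < n → n < N → 1 / (x (n + 1) - x n) - 1 / (x n - x (n - 1)) = u n)
    {m : ℕ} (hm : 1 ≤ m) (hmN : m < N) :
    ∑ n ∈ Finset.Ico 1 (m + 1),
        ((g (n + 1) - g n) / (x (n + 1) - x n)
          + β * (u (n + 1) * g (n + 1)) + (1 - β) * (u n * g n))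
      = g (m + 1) / (x (m + 1) - x m) - g 1 / (x 2 - x 1)
        + β * u (m + 1) * g (m + 1) + (1 - β) * u 1 * g 1 := by
  induction m, hm using Nat.le_induction with
  | base => simp; ring
  | succ k hk ih =>
    rw [Finset.sum_Ico_succ_top (by omega), ih (by omega)]
    have := hrel (k + 1) (by omega) hmN
    rw [Nat.add_sub_cancel] at this
    rw [← this]
    ring

theorem stein_equation_bound (l : ℕ) (c : ℝ) (hc : IsNormalizing l c)
    (a b : EReal) (hab : a < b)
    (ha : a = ⊥ ∨ ∃ a' : ℝ, a = (a' : EReal) ∧ heFun l c a' = 0)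
    (hb : b = ⊤ ∨ ∃ b' : ℝ, b = (b' : EReal) ∧ heFun l c b' = 0)
    (S : Set ℝ) (hS : S = {t : ℝ | a < (t : EReal) ∧ (t : EReal) < b})
    (hpos : ∀ t ∈ S, 0 < heFun l c t)
    (N : ℕ) (hN : 3 ≤ N) (x : ℕ → ℝ)
    (hmem : ∀ n, 1 ≤ n → n ≤ N → x n ∈ S)
    (hmono : ∀ n, 1 ≤ n → n < N → x n < x (n + 1))
    (hrel : ∀ n, 1 < n → n < N →
      1 / (x (n + 1) - x n) - 1 / (x n - x (n - 1))
        = deriv (heFun l c) (x n) / heFun l c (x n))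
    (β : ℝ) (hβ : β ∈ Set.Icc (0 : ℝ) 1)
    (h : ℝ → ℝ) (hdiff : Differentiable ℝ h) (hlip : LipschitzWith 1 h)
    (M : ℝ)
    (hM : ∀ t ∈ Set.Ioo (x 1) (x N),
      |deriv (deriv (steinG (heFun l c) S h)) t| ≤ M) :
    |(∫ t, h t ∂(interDist N x)) - ∫ t, h t ∂(densMeasure (heFun l c) S)|
      ≤ (1 / ((N : ℝ) - 1)) *
        (|steinG (heFun l c) S h (x N) / (x N - x (N - 1))
            - steinG (heFun l c) S h (x 1) / (x 2 - x 1)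
            + β * (deriv (heFun l c) (x N) / heFun l c (x N))
                * steinG (heFun l c) S h (x N)
            + (1 - β) * (deriv (heFun l c) (x 1) / heFun l c (x 1))
                * steinG (heFun l c) S h (x 1)|
          + (x N - x 1) * (1 + M)) := by
  have hSo : IsOpen S := by
    rw [hS]
    exact (isOpen_Ioi.preimage continuous_coe_real_ereal).inter
      (isOpen_Iio.preimage continuous_coe_real_ereal)
  have hSc : ∀ {p q}, p ∈ S → q ∈ S → Set.Icc p q ⊆ S := by
    intro p q hp hq t ht
    rw [hS] at hp hq ⊢
    exact ⟨hp.1.trans_le (EReal.coe_le_coe_iff.2 ht.1),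
      (EReal.coe_le_coe_iff.2 ht.2).trans_lt hq.2⟩
  set g := steinG (heFun l c) S h with hg
  set E := ∫ t, h t ∂(densMeasure (heFun l c) S) with hE
  set u : ℕ → ℝ := fun n => deriv (heFun l c) (x n) / heFun l c (x n) with hu
  obtain ⟨m, rfl⟩ : ∃ m, N = m + 1 := ⟨N - 1, by omega⟩
  have hgd : ∀ t ∈ S, HasDerivAt g
      (h t - E - deriv (heFun l c) t / heFun l c t * g t) t :=
    fun t ht => hasDerivAt_steinG l c hSo hpos hlip ht
  have hstein : ∀ n, 1 ≤ n → n ≤ m + 1 → h (x n) - E = deriv g (x n) + u n * g (x n) := by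
    intro n h1 h2
    rw [(hgd _ (hmem n h1 h2)).deriv]
    ring
  have hm0 : (0 : ℝ) < m := by exact_mod_cast (by omega : 0 < m)
  have hcast : ((m + 1 : ℕ) : ℝ) - 1 = m := by push_cast; ring
  rw [integral_interDist (by omega) hmono hdiff.continuous, hcast]
  -- the averaging error and the derivative error over the `n`-th gap
  set A : ℕ → ℝ := fun n => 1 / (x (n + 1) - x n) * (∫ t in x n..x (n + 1), h t)
    - (β * h (x (n + 1)) + (1 - β) * h (x n)) with hA
  set D : ℕ → ℝ := fun n => β * deriv g (x (n + 1)) + (1 - β) * deriv g (x n)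
    - (g (x (n + 1)) - g (x n)) / (x (n + 1) - x n) with hD
  have hparts := sum_by_parts (N := m + 1) (x := x) (u := u) (g := fun n => g (x n)) β hrel
    (m := m) (by omega) (by omega)
  have hdecomp : 1 / (m : ℝ) * (∑ n ∈ Finset.Ico 1 (m + 1),
        1 / (x (n + 1) - x n) * ∫ t in x n..x (n + 1), h t) - E
      = 1 / (m : ℝ) * ((g (x (m + 1)) / (x (m + 1) - x m) - g (x 1) / (x 2 - x 1)
        + β * u (m + 1) * g (x (m + 1)) + (1 - β) * u 1 * g (x 1))
        + ∑ n ∈ Finset.Ico 1 (m + 1), (A n + D n)) := by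
    have hsumE : ∑ _n ∈ Finset.Ico 1 (m + 1), E = m * E := by simp
    rw [← hparts, ← Finset.sum_add_distrib]
    have : E = 1 / (m : ℝ) * (m * E) := by field_simp
    nth_rewrite 1 [this]
    rw [← hsumE, ← mul_sub, ← Finset.sum_sub_distrib]
    congr 1
    refine Finset.sum_congr rfl fun n hn => ?_
    have hn' := Finset.mem_Ico.1 hn
    have e1 := hstein n hn'.1 hn'.2.le
    have e2 := hstein (n + 1) (by omega) (by omega)
    simp only [hA, hD]
    linear_combination β * e2 + (1 - β) * e1
  have herr : |∑ n ∈ Finset.Ico 1 (m + 1), (A n + D n)| ≤ (x (m + 1) - x 1) * (1 + M) := by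
    have htel : (x (m + 1) - x 1) * (1 + M)
        = ∑ n ∈ Finset.Ico 1 (m + 1), (x (n + 1) - x n) * (1 + M) := by
      rw [← Finset.sum_mul, Finset.sum_Ico_sub x (by omega)]
    rw [htel]
    refine (Finset.abs_sum_le_sum_abs _ _).trans (Finset.sum_le_sum fun n hn => ?_)
    have hn' := Finset.mem_Ico.1 hn
    have hlt := hmono n hn'.1 hn'.2
    have hsub := hSc (hmem n hn'.1 hn'.2.le) (hmem (n + 1) (by omega) (by omega))
    have hAn : |A n| ≤ x (n + 1) - x n := abs_average_sub_convexComb_le hlip hlt hβ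
    have hDn : |D n| ≤ M * (x (n + 1) - x n) :=
      abs_convexComb_deriv_sub_slope_le hlt hβ
        (fun t ht => (hgd t (hsub ht)).differentiableAt)
        (fun t ht => differentiableAt_deriv_steinG l c hSo hpos hdiff hlip (hsub ht))
        (fun t ht => hM t
          ⟨(le_of_le_index hmono le_rfl hn'.1 hn'.2.le).trans_lt ht.1,
            ht.2.trans_le (le_of_le_index hmono (by omega) (by omega) le_rfl)⟩)
    calc |A n + D n| ≤ |A n| + |D n| := abs_add_le _ _
      _ ≤ (x (n + 1) - x n) * (1 + M) := by linarith
  rw [hdecomp, abs_mul, abs_of_pos (by positivity : 0 < 1 / (m : ℝ)), Nat.add_sub_cancel]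
  refine mul_le_mul_of_nonneg_left ?_ (by positivity)
  exact (abs_add_le _ _).trans (by gcongr)
end
end
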